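/- For every real s > 2 there exists a constant K_s > 0 with the following property. Let S be the kernel S(k,ℓ) = Λ(k,ℓ)/|kℓ(k+ℓ)|^{1/2} if kℓ(k+ℓ) ≠ 0 and 0 otherwise, with Λ(k,ℓ) = 2|k+ℓ|·|k|·|ℓ|/(|k+ℓ|+|k|+|ℓ|) for (k,ℓ)≠(0,0) and Λ(0,0)=0. For every measurable f:ℝ→ℂ with f(−k) = conj(f(k)) almost everywhere, with ‖f‖₀ := (∫_ℝ |f(k)|² dk)^{1/2} < ∞ and ‖f‖_s := (∫_ℝ |k|^{2s}|f(k)|² dk)^{1/2} < ∞, and such that (k,ℓ) ↦ (|k|^{2s+1}+|k−ℓ|^{2s+1}+|ℓ|^{2s+1})|S(k−ℓ,ℓ)||f(k−ℓ)||f(ℓ)||f(−k)| is integrable on ℝ², one has | ∬_{ℝ²} k|k|^{2s} S(k−ℓ,ℓ) f(k−ℓ) f(ℓ) f(−k) dℓ dk | ≤ K_s · ‖f‖₀^{1−2/s} · ‖f‖_s^{2+2/s}. -/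

import Mathlib

open MeasureTheory

/-- The kernel `Λ` of the surface-wave amplitude equation. -/
noncomputable def Lam (k l : ℝ) : ℝ :=
  if (k, l) = ((0 : ℝ), (0 : ℝ)) then 0
  else 2 * |k + l| * |k| * |l| / (|k + l| + |k| + |l|)

/-- The kernel `S` of the noncanonical form of the amplitude equation. -/
noncomputable def Sker (k l : ℝ) : ℝ :=
  if k * l * (k + l) ≠ 0 then Lam k l / Real.sqrt |k * l * (k + l)| else 0

/-!
Writing `(k, l)` as the resonant triad `(a, b, c) = (k - l, l, -k)`, `a + b + c = 0`, the trilinear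
form is unchanged under cyclic rotations of the triad, so `k |k|²ˢ = -c|c|²ˢ` may be replaced by
`-(a|a|²ˢ + b|b|²ˢ + c|c|²ˢ) / 3`. If `b` is the smallest frequency, the mean value theorem bounds
this sum by a multiple of `|b| |a|ˢ |c|ˢ`, and AM-GM bounds the kernel by `|b|^(1/2)`. By AM-GM for
the two large frequencies, the form is at most a multiple of `‖f‖ₛ²` times the `L¹` norm of
`|k|^(3/2) f`, which Carlson's inequality, Cauchy–Schwarz with a rescaled weight, interpolates
between `‖f‖₀` and `‖f‖ₛ` when `s > 2`.
-/

section CauchySchwarz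

variable {X E : Type*} [MeasurableSpace X] {μ : Measure X} [NormedAddCommGroup E]

lemma integral_mul_le_sqrt_mul_sqrt {u v : X → ℝ} (hu₀ : 0 ≤ u) (hv₀ : 0 ≤ v)
    (hu : MemLp u 2 μ) (hv : MemLp v 2 μ) :
    ∫ x, u x * v x ∂μ ≤ √(∫ x, u x ^ 2 ∂μ) * √(∫ x, v x ^ 2 ∂μ) := by
  have holder := integral_mul_le_Lp_mul_Lq_of_nonneg Real.HolderConjugate.two_two (μ := μ)
    (.of_forall hu₀) (.of_forall hv₀) (by simpa using hu) (by simpa using hv)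
  simpa only [Real.rpow_two, ← Real.sqrt_eq_rpow] using holder

lemma aestronglyMeasurable_norm_of_integrable_sq {f : X → E}
    (hf : Integrable (fun x ↦ ‖f x‖ ^ 2) μ) : AEStronglyMeasurable (fun x ↦ ‖f x‖) μ := by
  simpa only [Function.comp_def, Real.sqrt_sq (norm_nonneg _)] using
    Real.continuous_sqrt.comp_aestronglyMeasurable hf.aestronglyMeasurable

end CauchySchwarz

section Carlson

/-- The weight of Carlson's inequality: `(|x| ^ α * ‖f x‖) ^ 2` is its product with the energy
density `(1 + |x| ^ (2 * s)) * ‖f x‖ ^ 2`, so Cauchy–Schwarz only asks that it be integrable. -/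
noncomputable def carlsonWeight (α s x : ℝ) : ℝ := |x| ^ (2 * α) / (1 + |x| ^ (2 * s))

variable {E : Type*} [NormedAddCommGroup E] {α s R : ℝ} {f : ℝ → E}

lemma carlsonWeight_nonneg (α s x : ℝ) : 0 ≤ carlsonWeight α s x := by
  unfold carlsonWeight; positivity

lemma measurable_carlsonWeight (α s : ℝ) : Measurable (carlsonWeight α s) := by
  unfold carlsonWeight; fun_prop

lemma integrable_carlsonWeight (hα : -1 < 2 * α) (hs : 2 * α + 1 < 2 * s) :
    Integrable (carlsonWeight α s) := by
  have radial : IntegrableOn (fun x : ℝ ↦ x ^ (2 * α) / (1 + x ^ (2 * s))) (Set.Ioi 0) := by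
    have meas : Measurable fun x : ℝ ↦ x ^ (2 * α) / (1 + x ^ (2 * s)) := by fun_prop
    rw [← Set.Ioc_union_Ioi_eq_Ioi zero_le_one]
    refine IntegrableOn.union ?_ ?_
    · refine ((intervalIntegrable_iff_integrableOn_Ioc_of_le zero_le_one).mp
        (intervalIntegral.intervalIntegrable_rpow' hα)).mono' meas.aestronglyMeasurable ?_
      filter_upwards [ae_restrict_mem measurableSet_Ioc] with x hx
      have hx₀ : 0 < x := hx.1
      rw [Real.norm_of_nonneg (by positivity)]
      exact div_le_self (by positivity) (by linarith [Real.rpow_nonneg hx₀.le (2 * s)])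
    · refine (integrableOn_Ioi_rpow_of_lt (a := 2 * α - 2 * s) (by linarith) one_pos).mono'
        meas.aestronglyMeasurable ?_
      filter_upwards [ae_restrict_mem measurableSet_Ioi] with x hx
      have hx₀ : 0 < x := one_pos.trans hx
      rw [Real.norm_of_nonneg (by positivity), Real.rpow_sub hx₀]
      gcongr
      linarith
  unfold carlsonWeight
  simpa using (integrable_fun_norm_addHaar (volume : Measure ℝ)
    (f := fun x : ℝ ↦ x ^ (2 * α) / (1 + x ^ (2 * s)))).mpr (by simpa using radial)

lemma integral_carlsonWeight_pos (hα : -1 < 2 * α) (hs : 2 * α + 1 < 2 * s) :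
    0 < ∫ x, carlsonWeight α s x := by
  rw [integral_pos_iff_support_of_nonneg (carlsonWeight_nonneg α s)
    (integrable_carlsonWeight hα hs)]
  refine lt_of_lt_of_le ?_ (measure_mono (?_ : Set.Ioo (0 : ℝ) 1 ⊆ _))
  · simp
  · intro x hx
    have : 0 < |x| := abs_pos.mpr hx.1.ne'
    exact (show 0 < carlsonWeight α s x by unfold carlsonWeight; positivity).ne'

lemma memLp_sqrt_carlsonWeight_div (hα : -1 < 2 * α) (hs : 2 * α + 1 < 2 * s) (hR : R ≠ 0) :
    MemLp (fun x ↦ √(carlsonWeight α s (x / R))) 2 := by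
  have meas : AEStronglyMeasurable fun x ↦ √(carlsonWeight α s (x / R)) :=
    ((measurable_carlsonWeight α s).comp (measurable_id.div_const R)).sqrt.aestronglyMeasurable
  rw [memLp_two_iff_integrable_sq meas]
  simpa only [Real.sq_sqrt (carlsonWeight_nonneg ..)] using
    (integrable_carlsonWeight hα hs).comp_div hR

lemma sq_sqrt_one_add_abs_div_rpow_mul (s : ℝ) (hR : 0 < R) (x y : ℝ) :
    (√(1 + |x / R| ^ (2 * s)) * y) ^ 2 = y ^ 2 + |x| ^ (2 * s) * y ^ 2 / R ^ (2 * s) := by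
  rw [mul_pow, Real.sq_sqrt (by positivity), abs_div, abs_of_pos hR,
    Real.div_rpow (abs_nonneg x) hR.le]
  ring

lemma memLp_sqrt_one_add_abs_div_rpow_mul_norm (hf : Integrable fun x ↦ ‖f x‖ ^ 2)
    (hfs : Integrable fun x ↦ |x| ^ (2 * s) * ‖f x‖ ^ 2) (hR : 0 < R) :
    MemLp (fun x ↦ √(1 + |x / R| ^ (2 * s)) * ‖f x‖) 2 := by
  have meas : AEStronglyMeasurable (fun x ↦ √(1 + |x / R| ^ (2 * s)) * ‖f x‖) :=
    (Measurable.aestronglyMeasurable (by fun_prop)).mul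
      (aestronglyMeasurable_norm_of_integrable_sq hf)
  rw [memLp_two_iff_integrable_sq meas]
  simp only [sq_sqrt_one_add_abs_div_rpow_mul s hR]
  exact hf.add (hfs.div_const _)

lemma abs_rpow_mul_eq_sqrt_carlsonWeight_mul (α s : ℝ) (hR : 0 < R) (x y : ℝ) :
    |x| ^ α * y =
      R ^ α * (√(carlsonWeight α s (x / R)) * (√(1 + |x / R| ^ (2 * s)) * y)) := by
  have cancel : √(carlsonWeight α s (x / R)) * √(1 + |x / R| ^ (2 * s)) = |x / R| ^ α := by
    rw [← Real.sqrt_mul (carlsonWeight_nonneg ..), carlsonWeight,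
      div_mul_cancel₀ _ (by positivity), mul_comm 2 α, Real.rpow_mul (abs_nonneg _),
      Real.rpow_two, Real.sqrt_sq (by positivity)]
  rw [← mul_assoc (√_), cancel, abs_div, abs_of_pos hR, Real.div_rpow (abs_nonneg x) hR.le]
  field_simp

lemma integrable_abs_rpow_mul_norm (hα : -1 < 2 * α) (hs : 2 * α + 1 < 2 * s)
    (hf : Integrable fun x ↦ ‖f x‖ ^ 2)
    (hfs : Integrable fun x ↦ |x| ^ (2 * s) * ‖f x‖ ^ 2) :
    Integrable fun x ↦ |x| ^ α * ‖f x‖ := by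
  simp only [abs_rpow_mul_eq_sqrt_carlsonWeight_mul α s one_pos]
  exact ((memLp_sqrt_carlsonWeight_div hα hs one_ne_zero).integrable_mul
    (memLp_sqrt_one_add_abs_div_rpow_mul_norm hf hfs one_pos)).const_mul _

lemma integral_abs_rpow_mul_norm_le_of_scale (hα : -1 < 2 * α) (hs : 2 * α + 1 < 2 * s)
    (hf : Integrable fun x ↦ ‖f x‖ ^ 2)
    (hfs : Integrable fun x ↦ |x| ^ (2 * s) * ‖f x‖ ^ 2) (hR : 0 < R) :
    ∫ x, |x| ^ α * ‖f x‖ ≤ R ^ α * (√(R * ∫ x, carlsonWeight α s x) *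
      √((∫ x, ‖f x‖ ^ 2) + (∫ x, |x| ^ (2 * s) * ‖f x‖ ^ 2) / R ^ (2 * s))) := by
  have weight_scaled : ∫ x, √(carlsonWeight α s (x / R)) ^ 2 = R * ∫ x, carlsonWeight α s x := by
    simp only [Real.sq_sqrt (carlsonWeight_nonneg ..), Measure.integral_comp_div, abs_of_pos hR,
      smul_eq_mul]
  have energy_scaled : ∫ x, (√(1 + |x / R| ^ (2 * s)) * ‖f x‖) ^ 2 =
      (∫ x, ‖f x‖ ^ 2) + (∫ x, |x| ^ (2 * s) * ‖f x‖ ^ 2) / R ^ (2 * s) := by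
    simp only [sq_sqrt_one_add_abs_div_rpow_mul s hR]
    rw [integral_add hf (hfs.div_const _), integral_div]
  simp only [abs_rpow_mul_eq_sqrt_carlsonWeight_mul α s hR, integral_const_mul]
  rw [← weight_scaled, ← energy_scaled]
  gcongr
  exact integral_mul_le_sqrt_mul_sqrt (fun x ↦ by positivity) (fun x ↦ by positivity)
    (memLp_sqrt_carlsonWeight_div hα hs hR.ne')
    (memLp_sqrt_one_add_abs_div_rpow_mul_norm hf hfs hR)

lemma sqrt_integral_abs_rpow_mul_norm_sq_pos
    (hfs : Integrable fun x ↦ |x| ^ (2 * s) * ‖f x‖ ^ 2) (hf₀ : ¬ f =ᵐ[volume] 0) :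
    0 < √(∫ x, |x| ^ (2 * s) * ‖f x‖ ^ 2) := by
  refine Real.sqrt_pos.mpr ((integral_nonneg fun x ↦ by positivity).lt_of_ne' fun h ↦ hf₀ ?_)
  rw [integral_eq_zero_iff_of_nonneg (fun x ↦ by positivity) hfs] at h
  filter_upwards [h, Measure.ae_ne volume (0 : ℝ)] with x hx hx₀
  have : 0 < |x| ^ (2 * s) := Real.rpow_pos_of_pos (abs_pos.mpr hx₀) _
  simpa [this.ne'] using hx

lemma integral_abs_rpow_mul_norm_le (hα : -1 < 2 * α) (hs : 2 * α + 1 < 2 * s)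
    (hf : Integrable fun x ↦ ‖f x‖ ^ 2)
    (hfs : Integrable fun x ↦ |x| ^ (2 * s) * ‖f x‖ ^ 2) :
    ∫ x, |x| ^ α * ‖f x‖ ≤ √(2 * ∫ x, carlsonWeight α s x) *
      √(∫ x, ‖f x‖ ^ 2) ^ (1 - (α + 1 / 2) / s) *
      √(∫ x, |x| ^ (2 * s) * ‖f x‖ ^ 2) ^ ((α + 1 / 2) / s) := by
  have hs₀ : 0 < s := by linarith
  by_cases hf₀ : f =ᵐ[volume] 0
  · have : ∫ x, |x| ^ α * ‖f x‖ = 0 :=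
      integral_eq_zero_of_ae (hf₀.mono fun x hx ↦ by simp [hx])
    rw [this]
    positivity
  set A := √(∫ x, ‖f x‖ ^ 2) with hA
  set B := √(∫ x, |x| ^ (2 * s) * ‖f x‖ ^ 2)
  have hApos : 0 < A := by
    simpa [hA] using sqrt_integral_abs_rpow_mul_norm_sq_pos (s := 0) (by simpa using hf) hf₀
  have hBpos : 0 < B := sqrt_integral_abs_rpow_mul_norm_sq_pos hfs hf₀
  have hA2 : ∫ x, ‖f x‖ ^ 2 = A ^ 2 := (Real.sq_sqrt (integral_nonneg fun x ↦ by positivity)).symm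
  have hB2 : ∫ x, |x| ^ (2 * s) * ‖f x‖ ^ 2 = B ^ 2 :=
    (Real.sq_sqrt (integral_nonneg fun x ↦ by positivity)).symm
  set R := (B / A) ^ s⁻¹ with hR_def
  have hR : 0 < R := by positivity
  have hRpow (t : ℝ) : R ^ t = (B / A) ^ (t / s) := by
    rw [hR_def, ← Real.rpow_mul (by positivity), inv_mul_eq_div]
  have balance : A ^ 2 + B ^ 2 / R ^ (2 * s) = 2 * A ^ 2 := by
    rw [hRpow, mul_div_assoc, div_self hs₀.ne', mul_one, Real.rpow_two]
    field_simp
    ring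
  calc ∫ x, |x| ^ α * ‖f x‖
      ≤ R ^ α * (√(R * ∫ x, carlsonWeight α s x) * √(A ^ 2 + B ^ 2 / R ^ (2 * s))) := by
        rw [← hA2, ← hB2]
        exact integral_abs_rpow_mul_norm_le_of_scale hα hs hf hfs hR
    _ = √(2 * ∫ x, carlsonWeight α s x) * (A * R ^ (α + 1 / 2)) := by
        rw [balance, Real.sqrt_mul hR.le, Real.sqrt_mul zero_le_two, Real.sqrt_mul zero_le_two,
          Real.sqrt_sq hApos.le, Real.rpow_add hR, ← Real.sqrt_eq_rpow]
        ring
    _ = _ := by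
        rw [hRpow, Real.rpow_sub hApos, Real.rpow_one, Real.div_rpow hBpos.le hApos.le]
        ring

end Carlson

section Kernel

lemma hasDerivAt_mul_abs_rpow {p : ℝ} (hp : 0 ≤ p) (x : ℝ) :
    HasDerivAt (fun y : ℝ ↦ y * |y| ^ p) ((p + 1) * |x| ^ p) x := by
  have continuous_rpow : Continuous fun y : ℝ ↦ |y| ^ p := continuous_abs.rpow_const fun _ ↦ .inr hp
  refine hasDerivAt_of_hasDerivAt_of_ne' (x := 0) (fun y hy ↦ ?_)
    (continuous_id.mul continuous_rpow).continuousAt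
    (continuous_const.mul continuous_rpow).continuousAt x
  have hy' : |y| ≠ 0 := abs_ne_zero.mpr hy
  convert! (hasDerivAt_id y).mul ((hasDerivAt_abs hy).rpow_const (p := p) (.inl hy')) using 1
  rw [Real.rpow_sub_one hy']
  have : (SignType.sign y : ℝ) * y = |y| := sign_mul_self y
  simp only [Pi.mul_apply, id]
  field_simp
  linear_combination -p * this

lemma abs_mul_abs_rpow_sub_le {p x y M : ℝ} (hp : 0 ≤ p) (hx : |x| ≤ M) (hy : |y| ≤ M) :
    |x * |x| ^ p - y * |y| ^ p| ≤ (p + 1) * M ^ p * |x - y| := by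
  refine (convex_Icc (-M) M).norm_image_sub_le_of_norm_hasDerivWithin_le
    (fun z _ ↦ (hasDerivAt_mul_abs_rpow hp z).hasDerivWithinAt) (fun z hz ↦ ?_)
    (abs_le.mp hy) (abs_le.mp hx)
  rw [Real.norm_of_nonneg (by positivity)]
  gcongr
  exact abs_le.mpr hz

/-- The cyclically symmetric form of `Sker`: on a resonant triad `a + b + c = 0` it equals
`Sker a b`. -/
noncomputable def triadKernel (a b c : ℝ) : ℝ := 2 * √|a * b * c| / (|a| + |b| + |c|)

lemma triadKernel_nonneg (a b c : ℝ) : 0 ≤ triadKernel a b c := by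
  unfold triadKernel; positivity

lemma triadKernel_rotate (a b c : ℝ) : triadKernel b c a = triadKernel a b c := by
  unfold triadKernel
  congr 1 <;> ring_nf

lemma Sker_eq_triadKernel (k l : ℝ) : Sker k l = triadKernel k l (-(k + l)) := by
  simp only [Sker, Lam, triadKernel, mul_neg, abs_neg, ite_not, Prod.mk.injEq]
  split_ifs with h hkl
  · simp [h]
  · simp [hkl] at h
  have hroot : √|k * l * (k + l)| ≠ 0 := (Real.sqrt_pos.mpr (abs_pos.mpr h)).ne'
  have hnum : |k + l| * |k| * |l| = √|k * l * (k + l)| ^ 2 := by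
    rw [Real.sq_sqrt (abs_nonneg _), abs_mul, abs_mul]; ring
  rw [show 2 * |k + l| * |k| * |l| = 2 * √|k * l * (k + l)| ^ 2 by rw [← hnum]; ring]
  field_simp
  ring

lemma triadKernel_le_sqrt (a b c : ℝ) : triadKernel a b c ≤ √|b| := by
  have amgm : 2 * √(|a| * |c|) ≤ |a| + |c| := by
    rw [Real.sqrt_mul (abs_nonneg a)]
    have := two_mul_le_add_sq √|a| √|c|
    rw [Real.sq_sqrt (abs_nonneg a), Real.sq_sqrt (abs_nonneg c)] at this
    linarith
  refine div_le_of_le_mul₀ (by positivity) (by positivity) ?_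
  rw [show |a * b * c| = |b| * (|a| * |c|) by rw [abs_mul, abs_mul]; ring,
    Real.sqrt_mul (abs_nonneg b)]
  nlinarith [Real.sqrt_nonneg |b|, abs_nonneg b]

variable {s a b c : ℝ}

lemma max_abs_rpow_le_of_abs_le (hs : 0 ≤ s) (h : a + b + c = 0)
    (hba : |b| ≤ |a|) (hbc : |b| ≤ |c|) :
    max |a| |c| ^ (2 * s) ≤ 2 ^ s * (|a| ^ s * |c| ^ s) := by
  have ha_le : |a| ≤ 2 * |c| := by
    rw [show a = -(b + c) by linarith, abs_neg]
    linarith [abs_add_le b c]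
  have hc_le : |c| ≤ 2 * |a| := by
    rw [show c = -(a + b) by linarith, abs_neg]
    linarith [abs_add_le a b]
  have max_sq_le : max |a| |c| ^ 2 ≤ 2 * |a| * |c| := by
    rcases max_choice |a| |c| with h' | h' <;> rw [h'] <;> nlinarith [abs_nonneg a, abs_nonneg c]
  calc max |a| |c| ^ (2 * s) = (max |a| |c| ^ 2) ^ s := by
        rw [Real.rpow_mul (by positivity), Real.rpow_two]
    _ ≤ (2 * |a| * |c|) ^ s := by gcongr
    _ = 2 ^ s * (|a| ^ s * |c| ^ s) := by
        rw [Real.mul_rpow (by positivity) (abs_nonneg c), Real.mul_rpow zero_le_two (abs_nonneg a),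
          mul_assoc]

lemma abs_sum_mul_abs_rpow_le_of_abs_le (hs : 0 ≤ s) (h : a + b + c = 0)
    (hba : |b| ≤ |a|) (hbc : |b| ≤ |c|) :
    |a * |a| ^ (2 * s) + b * |b| ^ (2 * s) + c * |c| ^ (2 * s)| ≤
      (2 * s + 2) * 2 ^ s * (|b| * |a| ^ s * |c| ^ s) := by
  set M := max |a| |c|
  have odd_difference : |a * |a| ^ (2 * s) + c * |c| ^ (2 * s)| ≤
      (2 * s + 1) * M ^ (2 * s) * |b| := by
    have := abs_mul_abs_rpow_sub_le (x := a) (y := -c) (p := 2 * s) (by positivity)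
      (le_max_left |a| |c|) (by rw [abs_neg]; exact le_max_right _ _)
    rwa [abs_neg, neg_mul, sub_neg_eq_add, sub_neg_eq_add, show a + c = -b by linarith,
      abs_neg] at this
  have small_term : |b * |b| ^ (2 * s)| ≤ |b| * M ^ (2 * s) := by
    rw [abs_mul, abs_of_nonneg (by positivity : 0 ≤ |b| ^ (2 * s))]
    gcongr
    exact hba.trans (le_max_left _ _)
  calc _ ≤ |a * |a| ^ (2 * s) + c * |c| ^ (2 * s)| + |b * |b| ^ (2 * s)| := by
        rw [add_right_comm]; exact abs_add_le _ _
    _ ≤ (2 * s + 1) * M ^ (2 * s) * |b| + |b| * M ^ (2 * s) := add_le_add odd_difference small_term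
    _ = (2 * s + 2) * |b| * M ^ (2 * s) := by ring
    _ ≤ (2 * s + 2) * |b| * (2 ^ s * (|a| ^ s * |c| ^ s)) := by
        gcongr
        exact max_abs_rpow_le_of_abs_le hs h hba hbc
    _ = _ := by ring

lemma abs_sum_mul_triadKernel_le_of_abs_le (hs : 0 ≤ s) (h : a + b + c = 0)
    (hba : |b| ≤ |a|) (hbc : |b| ≤ |c|) :
    |a * |a| ^ (2 * s) + b * |b| ^ (2 * s) + c * |c| ^ (2 * s)| * triadKernel a b c ≤
      (2 * s + 2) * 2 ^ s * (|b| ^ (3 / 2 : ℝ) * |a| ^ s * |c| ^ s) := by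
  have three_halves : |b| ^ (3 / 2 : ℝ) = |b| * √|b| := by
    rw [Real.sqrt_eq_rpow, ← Real.rpow_one_add' (abs_nonneg b) (by norm_num)]
    norm_num
  calc _ ≤ (2 * s + 2) * 2 ^ s * (|b| * |a| ^ s * |c| ^ s) * √|b| :=
        mul_le_mul (abs_sum_mul_abs_rpow_le_of_abs_le hs h hba hbc) (triadKernel_le_sqrt a b c)
          (triadKernel_nonneg a b c) (by positivity)
    _ = _ := by rw [three_halves]; ring

lemma abs_sum_mul_triadKernel_le (hs : 0 ≤ s) (h : a + b + c = 0) :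
    |a * |a| ^ (2 * s) + b * |b| ^ (2 * s) + c * |c| ^ (2 * s)| * triadKernel a b c ≤
      (2 * s + 2) * 2 ^ s * (|b| ^ (3 / 2 : ℝ) * |a| ^ s * |c| ^ s +
        |a| ^ (3 / 2 : ℝ) * |c| ^ s * |b| ^ s + |c| ^ (3 / 2 : ℝ) * |b| ^ s * |a| ^ s) := by
  have smallest : (|b| ≤ |a| ∧ |b| ≤ |c|) ∨ (|a| ≤ |c| ∧ |a| ≤ |b|) ∨ (|c| ≤ |b| ∧ |c| ≤ |a|) := by
    grind
  rcases smallest with ⟨hba, hbc⟩ | ⟨hac, hab⟩ | ⟨hcb, hca⟩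
  · refine (abs_sum_mul_triadKernel_le_of_abs_le hs h hba hbc).trans ?_
    gcongr
    rw [add_assoc]
    exact le_add_of_nonneg_right (by positivity)
  · have bound := abs_sum_mul_triadKernel_le_of_abs_le hs (a := c) (b := a) (c := b)
      (by linarith) hac hab
    rw [← triadKernel_rotate c a b, add_rotate] at bound
    refine bound.trans ?_
    gcongr
    rw [add_right_comm]
    exact le_add_of_nonneg_left (by positivity)
  · have bound := abs_sum_mul_triadKernel_le_of_abs_le hs (a := b) (b := c) (c := a)
      (by linarith) hcb hca
    rw [triadKernel_rotate a b c, ← add_rotate] at bound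
    refine bound.trans ?_
    gcongr
    exact le_add_of_nonneg_left (by positivity)

end Kernel

section BirkhoffSum

lemma integral_comp_eq_of_measurePreserving {X Y E : Type*} [MeasurableSpace X]
    [MeasurableSpace Y] {μ : Measure X} {ν : Measure Y} [NormedAddCommGroup E] [NormedSpace ℝ E]
    {T : X → Y} {F : Y → E} (hT : MeasurePreserving T μ ν) (hF : AEStronglyMeasurable F ν) :
    ∫ x, F (T x) ∂μ = ∫ y, F y ∂ν := by
  rw [← hT.map_eq] at hF ⊢
  exact (integral_map hT.aemeasurable hF).symm

variable {X E : Type*} [MeasurableSpace X] {μ : Measure X} [NormedAddCommGroup E] {T : X → X}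
  {F : X → E}

lemma integrable_birkhoffSum (hT : MeasurePreserving T μ μ) (hF : Integrable F μ) (n : ℕ) :
    Integrable (birkhoffSum T F n) μ :=
  integrable_finsetSum _ fun i _ ↦ (hT.iterate i).integrable_comp_of_integrable hF

variable [NormedSpace ℝ E]

lemma integral_birkhoffSum (hT : MeasurePreserving T μ μ) (hF : Integrable F μ) (n : ℕ) :
    ∫ x, birkhoffSum T F n x ∂μ = n • ∫ x, F x ∂μ := by
  have iterate_int (i : ℕ) : Integrable (fun x ↦ F (T^[i] x)) μ :=
    (hT.iterate i).integrable_comp_of_integrable hF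
  simp only [birkhoffSum]
  rw [integral_finsetSum _ fun i _ ↦ iterate_int i]
  simp only [integral_comp_eq_of_measurePreserving (hT.iterate _) hF.aestronglyMeasurable,
    Finset.sum_const, Finset.card_range]

lemma norm_integral_le_of_norm_birkhoffSum_le (hT : MeasurePreserving T μ μ)
    (hF : Integrable F μ) {G : X → ℝ} (hG : Integrable G μ) {n : ℕ} (hn : n ≠ 0)
    (h : ∀ᵐ x ∂μ, ‖birkhoffSum T F n x‖ ≤ birkhoffSum T G n x) :
    ‖∫ x, F x ∂μ‖ ≤ ∫ x, G x ∂μ := by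
  have sum_le := norm_integral_le_of_norm_le (integrable_birkhoffSum hT hG n) h
  rw [integral_birkhoffSum hT hF, integral_birkhoffSum hT hG, ← Nat.cast_smul_eq_nsmul ℝ, norm_smul,
    Real.norm_natCast, nsmul_eq_mul] at sum_le
  exact le_of_mul_le_mul_left sum_le (by positivity)

end BirkhoffSum

section Triad

/-- The pair `(k, l)` stands for the resonant triad `(k - l, l, -k)`; this map sends the triad
`(a, b, c)` to `(c, a, b)`. -/
def triadRotation (p : ℝ × ℝ) : ℝ × ℝ := (-p.2, p.1 - p.2)

lemma measurePreserving_triadRotation : MeasurePreserving triadRotation :=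
  ((Measure.measurePreserving_neg volume).prod (.id volume)).comp
    (measurePreserving_prod_sub_swap volume volume)

lemma norm_integral_triad_le {E : Type*} [NormedAddCommGroup E] [NormedSpace ℝ E]
    {F : ℝ → ℝ → ℝ → E} {G : ℝ → ℝ → ℝ → ℝ}
    (hF : Integrable fun p : ℝ × ℝ ↦ F (p.1 - p.2) p.2 (-p.1))
    (hG : Integrable fun p : ℝ × ℝ ↦ G (p.1 - p.2) p.2 (-p.1))
    (h : ∀ a b c, a + b + c = 0 →
      ‖F a b c + F c a b + F b c a‖ ≤ G a b c + G c a b + G b c a) :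
    ‖∫ p : ℝ × ℝ, F (p.1 - p.2) p.2 (-p.1)‖ ≤ ∫ p : ℝ × ℝ, G (p.1 - p.2) p.2 (-p.1) := by
  refine norm_integral_le_of_norm_birkhoffSum_le measurePreserving_triadRotation hF hG
    three_ne_zero (.of_forall fun p ↦ ?_)
  have sub_eq : -p.2 - (p.1 - p.2) = -p.1 := by ring
  have sub_eq' : -(p.1 - p.2) - -p.1 = p.2 := by ring
  simpa [birkhoffSum, Finset.sum_range_succ, triadRotation, sub_eq, sub_eq'] using
    h (p.1 - p.2) p.2 (-p.1) (by ring)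

variable {u w : ℝ → ℝ}

lemma integrable_comp_sub_mul (hw : Integrable w) (hu : Integrable u) :
    Integrable fun p : ℝ × ℝ ↦ w (p.1 - p.2) * u p.2 :=
  (measurePreserving_sub_prod volume volume).integrable_comp_of_integrable (hw.mul_prod hu)

lemma integral_comp_sub_mul (hw : Integrable w) (hu : Integrable u) :
    ∫ p : ℝ × ℝ, w (p.1 - p.2) * u p.2 = (∫ x, w x) * ∫ x, u x :=
  (integral_comp_eq_of_measurePreserving (measurePreserving_sub_prod volume volume)
    (hw.mul_prod hu).aestronglyMeasurable).trans (integral_prod_mul w u)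

lemma integrable_average_mul (hw : Integrable w) (hu : Integrable u) :
    Integrable fun p : ℝ × ℝ ↦ (w (p.1 - p.2) + w (-p.1)) / 2 * u p.2 := by
  simp only [div_mul_eq_mul_div, add_mul]
  exact ((integrable_comp_sub_mul hw hu).add (hw.comp_neg.mul_prod hu)).div_const 2

lemma integral_average_mul (hw : Integrable w) (hu : Integrable u) :
    ∫ p : ℝ × ℝ, (w (p.1 - p.2) + w (-p.1)) / 2 * u p.2 = (∫ x, w x) * ∫ x, u x := by
  have reflected : ∫ p : ℝ × ℝ, w (-p.1) * u p.2 = (∫ x, w x) * ∫ x, u x := by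
    rw [← integral_neg_eq_self w]
    exact integral_prod_mul (fun x ↦ w (-x)) u
  simp only [div_mul_eq_mul_div, add_mul]
  rw [integral_div, integral_add (integrable_comp_sub_mul hw hu) (hw.comp_neg.mul_prod hu),
    integral_comp_sub_mul hw hu, reflected, add_self_div_two]

end Triad

section Estimate

/-- The integrand of the trilinear form in terms of the resonant triad
`(a, b, c) = (k - l, l, -k)`; the factor `k * |k| ^ (2 * s)` becomes `-c * |c| ^ (2 * s)`. -/
noncomputable def triadDensity (s : ℝ) (f : ℝ → ℂ) (a b c : ℝ) : ℂ :=
  ((-(c * |c| ^ (2 * s) * triadKernel a b c) : ℝ) : ℂ) * (f a * f b * f c)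

variable {s : ℝ} {f : ℝ → ℂ}

lemma triadDensity_eq (s : ℝ) (f : ℝ → ℂ) (k l : ℝ) :
    triadDensity s f (k - l) l (-k) = ((k * |k| ^ (2 * s) : ℝ) : ℂ) *
      ((Sker (k - l) l : ℝ) : ℂ) * f (k - l) * f l * f (-k) := by
  rw [Sker_eq_triadKernel, sub_add_cancel, triadDensity, abs_neg, neg_mul, neg_mul, neg_neg]
  push_cast
  ring

lemma norm_sum_triadDensity (s : ℝ) (f : ℝ → ℂ) (a b c : ℝ) :
    ‖triadDensity s f a b c + triadDensity s f c a b + triadDensity s f b c a‖ =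
      |a * |a| ^ (2 * s) + b * |b| ^ (2 * s) + c * |c| ^ (2 * s)| * triadKernel a b c *
        (‖f a‖ * ‖f b‖ * ‖f c‖) := by
  have factor : triadDensity s f a b c + triadDensity s f c a b + triadDensity s f b c a =
      ((-((a * |a| ^ (2 * s) + b * |b| ^ (2 * s) + c * |c| ^ (2 * s)) * triadKernel a b c) : ℝ) :
        ℂ) * (f a * f b * f c) := by
    simp only [triadDensity, triadKernel_rotate a b c, ← triadKernel_rotate c a b]
    push_cast
    ring
  rw [factor, norm_mul, Complex.norm_real, norm_neg, norm_mul, Real.norm_eq_abs,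
    Real.norm_of_nonneg (triadKernel_nonneg a b c), norm_mul, norm_mul]

/-- The majorant of the symmetrised integrand when `b` is the smallest frequency of the triad. -/
noncomputable def triadMajorant (s : ℝ) (f : ℝ → ℂ) (a b c : ℝ) : ℝ :=
  (2 * s + 2) * 2 ^ s * ((|a| ^ (2 * s) * ‖f a‖ ^ 2 + |c| ^ (2 * s) * ‖f c‖ ^ 2) / 2 *
    (|b| ^ (3 / 2 : ℝ) * ‖f b‖))

lemma mul_norm_le_triadMajorant (hs : 0 ≤ s) (f : ℝ → ℂ) (a b c : ℝ) :
    (2 * s + 2) * 2 ^ s * (|b| ^ (3 / 2 : ℝ) * |a| ^ s * |c| ^ s) * (‖f a‖ * ‖f b‖ * ‖f c‖) ≤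
      triadMajorant s f a b c := by
  have sq_rpow (x : ℝ) : |x| ^ (2 * s) = (|x| ^ s) ^ 2 := by
    rw [mul_comm, Real.rpow_mul (abs_nonneg x), Real.rpow_two]
  have amgm : (|a| ^ s * ‖f a‖) * (|c| ^ s * ‖f c‖) ≤
      (|a| ^ (2 * s) * ‖f a‖ ^ 2 + |c| ^ (2 * s) * ‖f c‖ ^ 2) / 2 := by
    rw [sq_rpow, sq_rpow]
    linarith [two_mul_le_add_sq (|a| ^ s * ‖f a‖) (|c| ^ s * ‖f c‖)]
  calc _ = (2 * s + 2) * 2 ^ s * ((|a| ^ s * ‖f a‖) * (|c| ^ s * ‖f c‖) *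
        (|b| ^ (3 / 2 : ℝ) * ‖f b‖)) := by ring
    _ ≤ _ := by unfold triadMajorant; gcongr

lemma norm_sum_triadDensity_le (hs : 0 ≤ s) (f : ℝ → ℂ) {a b c : ℝ} (h : a + b + c = 0) :
    ‖triadDensity s f a b c + triadDensity s f c a b + triadDensity s f b c a‖ ≤
      triadMajorant s f a b c + triadMajorant s f c a b + triadMajorant s f b c a := by
  rw [norm_sum_triadDensity]
  refine (mul_le_mul_of_nonneg_right (abs_sum_mul_triadKernel_le hs h) (by positivity)).trans ?_
  linarith [mul_norm_le_triadMajorant hs f a b c, mul_norm_le_triadMajorant hs f c a b,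
    mul_norm_le_triadMajorant hs f b c a]

lemma norm_integral_triadDensity_le (hs : 0 ≤ s)
    (hfs : Integrable fun k ↦ |k| ^ (2 * s) * ‖f k‖ ^ 2)
    (hu : Integrable fun k ↦ |k| ^ (3 / 2 : ℝ) * ‖f k‖)
    (hF : Integrable fun p : ℝ × ℝ ↦ triadDensity s f (p.1 - p.2) p.2 (-p.1)) :
    ‖∫ p : ℝ × ℝ, triadDensity s f (p.1 - p.2) p.2 (-p.1)‖ ≤ (2 * s + 2) * 2 ^ s *
      ((∫ k, |k| ^ (2 * s) * ‖f k‖ ^ 2) * ∫ k, |k| ^ (3 / 2 : ℝ) * ‖f k‖) := by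
  rw [← integral_average_mul hfs hu, ← integral_const_mul]
  exact norm_integral_triad_le (G := triadMajorant s f) hF
    ((integrable_average_mul hfs hu).const_mul _) fun _ _ _ ↦ norm_sum_triadDensity_le hs f

lemma integrable_trilinear_integrand (hs : 0 ≤ s) (hf : Measurable f)
    (h : Integrable fun p : ℝ × ℝ ↦
      (|p.1| ^ (2 * s + 1) + |p.1 - p.2| ^ (2 * s + 1) + |p.2| ^ (2 * s + 1)) *
        |Sker (p.1 - p.2) p.2| * ‖f (p.1 - p.2)‖ * ‖f p.2‖ * ‖f (-p.1)‖) :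
    Integrable fun p : ℝ × ℝ ↦ ((p.1 * |p.1| ^ (2 * s) : ℝ) : ℂ) *
      ((Sker (p.1 - p.2) p.2 : ℝ) : ℂ) * f (p.1 - p.2) * f p.2 * f (-p.1) := by
  refine h.mono' ?_ (.of_forall fun p ↦ ?_)
  · simp only [Sker_eq_triadKernel, triadKernel]
    exact Measurable.aestronglyMeasurable (by fun_prop)
  · have rpow_succ : |p.1| ^ (2 * s + 1) = |p.1| * |p.1| ^ (2 * s) := by
      rw [Real.rpow_add_one' (abs_nonneg _) (by positivity), mul_comm]
    have norm_le : ‖p.1 * |p.1| ^ (2 * s)‖ ≤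
        |p.1| ^ (2 * s + 1) + |p.1 - p.2| ^ (2 * s + 1) + |p.2| ^ (2 * s + 1) := by
      rw [norm_mul, Real.norm_eq_abs, Real.norm_of_nonneg (by positivity), ← rpow_succ, add_assoc]
      exact le_add_of_nonneg_right (by positivity)
    simp only [norm_mul, Complex.norm_real] at norm_le ⊢
    gcongr
    exact le_rfl

theorem trilinear_estimate_general (s : ℝ) (hs : 2 < s) :
    ∃ K : ℝ, 0 < K ∧ ∀ f : ℝ → ℂ,
      Integrable (fun k : ℝ ↦ ‖f k‖ ^ 2) →
      Integrable (fun k : ℝ ↦ |k| ^ (2 * s) * ‖f k‖ ^ 2) →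
      Integrable (fun p : ℝ × ℝ ↦ ((p.1 * |p.1| ^ (2 * s) : ℝ) : ℂ) *
        ((Sker (p.1 - p.2) p.2 : ℝ) : ℂ) * f (p.1 - p.2) * f p.2 * f (-p.1)) →
      ‖∫ p : ℝ × ℝ, ((p.1 * |p.1| ^ (2 * s) : ℝ) : ℂ) * ((Sker (p.1 - p.2) p.2 : ℝ) : ℂ) *
          f (p.1 - p.2) * f p.2 * f (-p.1)‖ ≤
        K * (√(∫ k : ℝ, ‖f k‖ ^ 2)) ^ (1 - 2 / s) *
          (√(∫ k : ℝ, |k| ^ (2 * s) * ‖f k‖ ^ 2)) ^ (2 + 2 / s) := by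
  have weight_pos : 0 < ∫ x, carlsonWeight (3 / 2) s x :=
    integral_carlsonWeight_pos (by norm_num) (by linarith)
  refine ⟨(2 * s + 2) * 2 ^ s * √(2 * ∫ x, carlsonWeight (3 / 2) s x), by positivity, ?_⟩
  intro f hf hfs hF
  simp only [← triadDensity_eq] at hF ⊢
  have carlson := integral_abs_rpow_mul_norm_le (α := 3 / 2) (by norm_num) (by linarith) hf hfs
  rw [show (3 / 2 + 1 / 2 : ℝ) = 2 by norm_num] at carlson
  set A := √(∫ k, ‖f k‖ ^ 2)
  set B := √(∫ k, |k| ^ (2 * s) * ‖f k‖ ^ 2)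
  have hB2 : ∫ k, |k| ^ (2 * s) * ‖f k‖ ^ 2 = B ^ 2 :=
    (Real.sq_sqrt (integral_nonneg fun k ↦ by positivity)).symm
  calc _ ≤ (2 * s + 2) * 2 ^ s * (B ^ 2 * ∫ k, |k| ^ (3 / 2 : ℝ) * ‖f k‖) :=
        hB2 ▸ norm_integral_triadDensity_le (by linarith) hfs
          (integrable_abs_rpow_mul_norm (by norm_num) (by linarith) hf hfs) hF
    _ ≤ (2 * s + 2) * 2 ^ s * (B ^ 2 *
        (√(2 * ∫ x, carlsonWeight (3 / 2) s x) * A ^ (1 - 2 / s) * B ^ (2 / s))) := by gcongr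
    _ = _ := by
      rw [Real.rpow_add_of_nonneg (Real.sqrt_nonneg _) zero_le_two (by positivity), Real.rpow_two]
      ring

end Estimate

/-- The trilinear estimate yielding the a priori `Hˢ` inequality
`|d/dτ ‖ψ‖ₛ²| ≤ 2Kₛ‖ψ‖₀^{1−2/s}‖ψ‖ₛ^{2+2/s}`. -/
theorem trilinear_estimate (s : ℝ) (hs : 2 < s) :
    ∃ K : ℝ, 0 < K ∧ ∀ f : ℝ → ℂ, Measurable f →
      (∀ᵐ k : ℝ, f (-k) = (starRingEnd ℂ) (f k)) →
      Integrable (fun k : ℝ => ‖f k‖ ^ 2) →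
      Integrable (fun k : ℝ => |k| ^ (2 * s) * ‖f k‖ ^ 2) →
      Integrable (fun p : ℝ × ℝ =>
        (|p.1| ^ (2 * s + 1) + |p.1 - p.2| ^ (2 * s + 1) + |p.2| ^ (2 * s + 1)) *
          |Sker (p.1 - p.2) p.2| * ‖f (p.1 - p.2)‖ * ‖f p.2‖ * ‖f (-p.1)‖) →
      ‖∫ p : ℝ × ℝ, ((p.1 * |p.1| ^ (2 * s) : ℝ) : ℂ) * ((Sker (p.1 - p.2) p.2 : ℝ) : ℂ) *
          f (p.1 - p.2) * f p.2 * f (-p.1)‖ ≤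
        K * (Real.sqrt (∫ k : ℝ, ‖f k‖ ^ 2)) ^ (1 - 2 / s) *
          (Real.sqrt (∫ k : ℝ, |k| ^ (2 * s) * ‖f k‖ ^ 2)) ^ (2 + 2 / s) := by
  obtain ⟨K, hK, bound⟩ := trilinear_estimate_general s hs
  exact ⟨K, hK, fun f hf _ hf₀ hfs hmaj ↦
    bound f hf₀ hfs (integrable_trilinear_integrand (by linarith) hf hmaj)⟩
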